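/- Let K₁ and K₂ be compact Hausdorff spaces such that for some ordinal α and some n ∈ ℕ with n ≥ 1, the α-th Cantor–Bendixson derivative K₁^(α) has exactly n elements and K₂^(α) has exactly one element. Then every positive isomorphism T : C(K₁) → C(K₂) satisfies ‖T‖·‖T⁻¹‖ ≥ 2n − 1; that is, d_BM⁺(C(K₁), C(K₂)) ≥ 2n − 1. -/

import Mathlib

open Ordinal Set

/-- The Cantor–Bendixson derivative of order `o`. -/
noncomputable def cbDeriv (X : Type*) [TopologicalSpace X] : Ordinal.{0} → Set X :=
  fun o => Ordinal.limitRecOn o Set.univ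
    (fun _ ih => derivedSet ih)
    (fun o _ ih => ⋂ (β : Ordinal) (h : β < o), ih β h)

theorem cb_zero (X : Type*) [TopologicalSpace X] : cbDeriv X 0 = Set.univ :=
  Ordinal.limitRecOn_zero _ _ _

theorem cb_succ (X : Type*) [TopologicalSpace X] (o : Ordinal.{0}) :
    cbDeriv X (o + 1) = derivedSet (cbDeriv X o) :=
  Ordinal.limitRecOn_add_one _ _ _ _

theorem cb_limit (X : Type*) [TopologicalSpace X] (o : Ordinal.{0}) (h : Order.IsSuccLimit o) :
    cbDeriv X o = ⋂ (β : Ordinal) (_ : β < o), cbDeriv X β :=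
  Ordinal.limitRecOn_limit _ _ _ _ h

theorem cb_closed (X : Type*) [TopologicalSpace X] [T1Space X] (o : Ordinal.{0}) :
    IsClosed (cbDeriv X o) := by
  induction o using Ordinal.limitRecOn with
  | zero => rw [cb_zero]; exact isClosed_univ
  | add_one o ih => rw [cb_succ]; exact isClosed_derivedSet _
  | limit o h ih =>
    rw [cb_limit X o h]
    exact isClosed_iInter fun β => isClosed_iInter fun hβ => ih β hβ

theorem cb_anti (X : Type*) [TopologicalSpace X] [T1Space X] (o : Ordinal.{0}) :
    ∀ γ ≤ o, cbDeriv X o ⊆ cbDeriv X γ := by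
  induction o using Ordinal.limitRecOn with
  | zero => intro γ hγ; rw [nonpos_iff_eq_zero.1 hγ]
  | add_one o ih =>
    intro γ hγ
    rcases hγ.lt_or_eq with h | h
    · have h' : γ ≤ o := Order.lt_add_one_iff.1 h
      refine Set.Subset.trans ?_ (ih γ h')
      rw [cb_succ]
      exact (derivedSet_subset_closure _).trans (cb_closed X o).closure_subset
    · rw [h]
  | limit o h ih =>
    intro γ hγ
    rcases hγ.lt_or_eq with h' | h'
    · rw [cb_limit X o h]
      exact Set.iInter₂_subset γ h'
    · rw [h']

theorem bump {X : Type*} [TopologicalSpace X] [CompactSpace X] [T2Space X] (U : Set X)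
    (hU : IsOpen U) (x : X) (hx : x ∈ U) :
    ∃ h : C(X, ℝ), (∀ p, 0 ≤ h p ∧ h p ≤ 1) ∧ (∀ p, p ∉ U → h p = 0) ∧
      ∃ V, IsOpen V ∧ x ∈ V ∧ ∀ p ∈ V, h p = 1 := by
  obtain ⟨g, g0, g1, g2⟩ := exists_continuous_zero_one_of_isClosed (s := Uᶜ) (t := {x})
    hU.isClosed_compl isClosed_singleton (by simpa using hx)
  refine ⟨⟨fun p => min 1 (2 * g p), by fun_prop⟩, ?_, ?_, {p | 1 / 2 < g p}, ?_, ?_, ?_⟩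
  · intro p
    have := (g2 p).1
    simp only [ContinuousMap.coe_mk]
    exact ⟨le_min zero_le_one (by linarith), min_le_left _ _⟩
  · intro p hp
    have : g p = 0 := g0 hp
    simp [this]
  · exact isOpen_lt continuous_const g.continuous
  · have : g x = 1 := g1 rfl
    simp only [Set.mem_ofPred_eq, this]; norm_num
  · intro p hp
    simp only [Set.mem_ofPred_eq] at hp
    simp only [ContinuousMap.coe_mk]
    exact min_eq_left (by linarith)

theorem bumps {X : Type*} [TopologicalSpace X] [CompactSpace X] [T2Space X] (t : Finset X) :
    ∃ h : X → C(X, ℝ), (∀ x p, 0 ≤ h x p ∧ h x p ≤ 1) ∧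
      (∀ x, ∃ V, IsOpen V ∧ x ∈ V ∧ ∀ p ∈ V, h x p = 1) ∧
      ∑ x ∈ t, h x ≤ 1 := by
  obtain ⟨U, hU, hd⟩ := t.finite_toSet.t2_separation
  choose h h1 h2 h3 using fun x => bump (U x) (hU x).2 x (hU x).1
  refine ⟨h, h1, h3, ?_⟩
  intro p
  change (∑ x ∈ t, h x) p ≤ (1 : C(X, ℝ)) p
  rw [ContinuousMap.sum_apply, ContinuousMap.one_apply]
  by_cases hp : ∃ x ∈ t, p ∈ U x
  · obtain ⟨x, hx, hpx⟩ := hp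
    rw [Finset.sum_eq_single x]
    · exact (h1 x p).2
    · intro b hb hbx
      apply h2
      intro hpb
      exact Set.disjoint_left.1 (hd hb hx hbx) hpb hpx
    · intro hx'; exact absurd hx hx'
  · push Not at hp
    rw [Finset.sum_eq_zero fun x hx => h2 x p (hp x hx)]
    exact zero_le_one

section
variable {K₁ K₂ : Type*} [TopologicalSpace K₁] [CompactSpace K₁] [T2Space K₁]
    [TopologicalSpace K₂] [CompactSpace K₂] [T2Space K₂]

theorem pos_mono (T : C(K₁, ℝ) →L[ℝ] C(K₂, ℝ)) (hT : ∀ f : C(K₁, ℝ), 0 ≤ f → 0 ≤ T f)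
    {f g : C(K₁, ℝ)} (h : f ≤ g) (z : K₂) : T f z ≤ T g z := by
  have := hT (g - f) (sub_nonneg.2 h) z
  rw [map_sub] at this
  simpa using this

theorem one_bound (T : C(K₁, ℝ) →L[ℝ] C(K₂, ℝ)) (z : K₂) : T 1 z ≤ ‖T‖ := by
  have h1 : ‖(1 : C(K₁, ℝ))‖ ≤ 1 := by
    rw [ContinuousMap.norm_le _ zero_le_one]; intro x; simp
  calc T 1 z ≤ ‖T 1 z‖ := Real.le_norm_self _
    _ ≤ ‖T 1‖ := ContinuousMap.norm_coe_le_norm _ _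
    _ ≤ ‖T‖ * ‖(1 : C(K₁, ℝ))‖ := T.le_opNorm _
    _ ≤ ‖T‖ := mul_le_of_le_one_right (ContinuousLinearMap.opNorm_nonneg _) h1

theorem sum_bound (T : C(K₁, ℝ) →L[ℝ] C(K₂, ℝ)) (hT : ∀ f : C(K₁, ℝ), 0 ≤ f → 0 ≤ T f)
    (t : Finset K₁) (h : K₁ → C(K₁, ℝ)) (hs : ∑ x ∈ t, h x ≤ 1) (z : K₂) :
    ∑ x ∈ t, T (h x) z ≤ T 1 z := by
  have := pos_mono T hT hs z
  rwa [map_sum, ContinuousMap.sum_apply] at this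

theorem key (T : C(K₁, ℝ) →L[ℝ] C(K₂, ℝ)) (hT : ∀ f : C(K₁, ℝ), 0 ≤ f → 0 ≤ T f)
    (ε : ℝ) (hε : 0 < ε) (β : Ordinal.{0}) :
    ∀ (W : Set K₂) (U : Set K₁), IsClosed W → W ∩ cbDeriv K₂ β = ∅ → IsOpen U →
      (U ∩ cbDeriv K₁ β).Nonempty →
      ∃ e : C(K₁, ℝ), (∀ p, 0 ≤ e p ∧ e p ≤ 1) ∧ (∀ p, p ∉ U → e p = 0) ∧
        (∃ p ∈ U, e p = 1) ∧ ∀ z ∈ W, T e z ≤ ε := by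
  induction β using Ordinal.limitRecOn with
  | zero =>
    intro W U _ hW hU hne
    rw [cb_zero, Set.inter_univ] at hW
    obtain ⟨x, hx, -⟩ := hne
    obtain ⟨h, h1, h2, V, -, hxV, h3⟩ := bump U hU x hx
    exact ⟨h, h1, h2, ⟨x, hx, h3 x hxV⟩, by simp [hW]⟩
  | add_one β ih =>
    intro W U hWc hW hU hne
    rw [cb_succ] at hW hne
    have hfin : (W ∩ cbDeriv K₂ β).Finite := by
      by_contra hinf
      have hc : IsClosed (W ∩ cbDeriv K₂ β) := hWc.inter (cb_closed K₂ β)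
      obtain ⟨x, hx, hacc⟩ := Set.Infinite.exists_accPt_of_subset_isCompact hinf hc.isCompact
        Set.Subset.rfl
      have : x ∈ W ∩ derivedSet (cbDeriv K₂ β) :=
        ⟨hx.1, hacc.mono (Filter.principal_mono.2 Set.inter_subset_right)⟩
      rw [hW] at this
      exact this
    have hinf : (U ∩ cbDeriv K₁ β).Infinite := by
      obtain ⟨x, hxU, hx⟩ := hne
      exact Set.Infinite.of_accPt (AccPt.nhds_inter hx (hU.mem_nhds hxU))
    set Z := hfin.toFinset with hZ
    obtain ⟨N, hN⟩ := exists_nat_gt ((Z.card : ℝ) * ‖T‖ / (ε / 2))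
    rw [div_lt_iff₀ (by positivity)] at hN
    obtain ⟨t, ht, htN⟩ := hinf.exists_subset_card_eq N
    obtain ⟨h, h1, h2, h3⟩ := bumps t
    have hpos : ∀ x z, 0 ≤ T (h x) z := fun x z => hT (h x) (fun p => (h1 x p).1) z
    have hex : ∃ x ∈ t, ∀ z ∈ Z, T (h x) z < ε / 2 := by
      by_contra hcon
      push Not at hcon
      have a1 : (N : ℝ) * (ε / 2) ≤ ∑ x ∈ t, ∑ z ∈ Z, T (h x) z := by
        rw [← htN, ← _root_.nsmul_eq_mul]
        apply Finset.card_nsmul_le_sum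
        intro x hx
        obtain ⟨z, hz, hzε⟩ := hcon x hx
        exact hzε.trans (Finset.single_le_sum (f := fun z => T (h x) z)
          (fun z _ => hpos x z) hz)
      rw [Finset.sum_comm] at a1
      have a2 : ∑ z ∈ Z, ∑ x ∈ t, T (h x) z ≤ Z.card • ‖T‖ := by
        apply Finset.sum_le_card_nsmul
        intro z _
        exact (sum_bound T hT t h h3 z).trans (one_bound T z)
      rw [_root_.nsmul_eq_mul] at a2
      linarith
    obtain ⟨x, hxt, hx⟩ := hex
    obtain ⟨V, hVo, hxV, hV⟩ := h2 x
    have hxU := ht hxt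
    obtain ⟨e, e1, e2, ⟨p, hp, hpe⟩, e4⟩ := ih (W ∩ {z | ε / 2 ≤ T (h x) z}) (U ∩ V)
      (hWc.inter (isClosed_le continuous_const (T (h x)).continuous))
      (by
        ext z
        simp only [Set.mem_inter_iff, Set.mem_ofPred_eq, Set.mem_empty_iff_false, iff_false]
        rintro ⟨⟨hzW, hz⟩, hzβ⟩
        have := hx z (by rw [hZ]; simpa using ⟨hzW, hzβ⟩)
        linarith)
      (hU.inter hVo) ⟨x, ⟨hxU.1, hxV⟩, hxU.2⟩
    refine ⟨e, e1, fun q hq => e2 q fun hq' => hq hq'.1, ⟨p, hp.1, hpe⟩, ?_⟩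
    intro z hz
    by_cases hz' : ε / 2 ≤ T (h x) z
    · exact e4 z ⟨hz, hz'⟩
    · have : T e z ≤ T (h x) z := by
        apply pos_mono T hT
        intro q
        change e q ≤ h x q
        by_cases hq : q ∈ U ∩ V
        · rw [hV q hq.2]; exact (e1 q).2
        · rw [e2 q hq]; exact (h1 x q).1
      linarith
  | limit β hβ ih =>
    intro W U hWc hW hU hne
    have : Nonempty (Set.Iio β) := ⟨⟨0, hβ.bot_lt⟩⟩
    obtain ⟨⟨γ, hγ⟩, hγW⟩ := hWc.isCompact.elim_directed_family_closed
      (fun γ : Set.Iio β => cbDeriv K₂ γ.1) (fun γ => cb_closed K₂ _)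
      (by
        rw [cb_limit K₂ β hβ] at hW
        rw [← hW]
        congr 1
        ext z
        simp)
      (by
        intro a b
        rcases le_total a.1 b.1 with hab | hab
        · exact ⟨b, cb_anti K₂ _ _ hab, Set.Subset.rfl⟩
        · exact ⟨a, Set.Subset.rfl, cb_anti K₂ _ _ hab⟩)
    obtain ⟨x, hxU, hx⟩ := hne
    exact ih γ hγ W U hWc hγW hU ⟨x, hxU, cb_anti K₁ β γ (le_of_lt hγ) hx⟩

theorem main_est (α : Ordinal.{0}) (y : K₂) (hy : cbDeriv K₂ α = {y}) (x : K₁)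
    (hx : x ∈ cbDeriv K₁ α) (g : C(K₁, ℝ)) (hg : ∀ p, 0 ≤ g p ∧ g p ≤ 1)
    (V : Set K₁) (hVo : IsOpen V) (hxV : x ∈ V) (hV : ∀ p ∈ V, g p = 1)
    (T : C(K₁, ℝ) ≃L[ℝ] C(K₂, ℝ)) (hT : ∀ f : C(K₁, ℝ), 0 ≤ f → 0 ≤ T f)
    (l : ℝ) (hl : 0 ≤ l) (ε : ℝ) (hε : 0 < ε) (B : ℝ)
    (hB1 : ‖(T : C(K₁, ℝ) →L[ℝ] C(K₂, ℝ))‖ ≤ B)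
    (hB2 : 2 * T g y - T 1 y + l * T g y ≤ B) :
    1 + l ≤ ‖(T.symm : C(K₂, ℝ) →L[ℝ] C(K₁, ℝ))‖ * (B + ε * (1 + l)) := by
  set T' : C(K₁, ℝ) →L[ℝ] C(K₂, ℝ) := (T : C(K₁, ℝ) →L[ℝ] C(K₂, ℝ)) with hT'
  have hT1 : ∀ f : C(K₁, ℝ), 0 ≤ f → 0 ≤ T' f := hT
  set f : C(K₁, ℝ) := (2 : ℝ) • g - 1 with hf
  have hTf : ∀ z, T f z = 2 * T g z - T 1 z := by
    intro z; rw [hf, map_sub, map_smul]; simp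
  let O : Set K₂ := {z | T f z < T f y + ε} ∩ {z | T g z < T g y + ε}
  have hO : IsOpen O := (isOpen_lt (T f).continuous continuous_const).inter
    (isOpen_lt (T g).continuous continuous_const)
  have hyO : y ∈ O := ⟨by simp [hε], by simp [hε]⟩
  obtain ⟨e, e1, e2, ⟨p, hpV, hp⟩, e4⟩ := key T' hT1 ε hε α Oᶜ V hO.isClosed_compl
    (by rw [hy]; simpa using hyO) hVo ⟨x, hxV, hx⟩
  have heg : e ≤ g := by
    intro q
    change e q ≤ g q
    by_cases hq : q ∈ V
    · rw [hV q hq]; exact (e1 q).2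
    · rw [e2 q hq]; exact (hg q).1
  have hTe0 : ∀ z, 0 ≤ T e z := fun z => hT e (fun q => (e1 q).1) z
  have hTg0 : ∀ z, 0 ≤ T g z := fun z => hT g (fun q => (hg q).1) z
  have hTeg : ∀ z, T e z ≤ T g z := fun z => pos_mono T' hT1 heg z
  have hTg1 : ∀ z, T g z ≤ T 1 z := fun z => pos_mono T' hT1 (fun q => (hg q).2) z
  have hT1M : ∀ z, T 1 z ≤ B := fun z => (one_bound T' z).trans hB1
  have hB0 : 0 ≤ B := (ContinuousLinearMap.opNorm_nonneg _).trans hB1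
  have hεl : 0 ≤ ε * l := by positivity
  have hle : ∀ z, T (f + l • e) z = 2 * T g z - T 1 z + l * T e z := by
    intro z; rw [map_add, map_smul, ContinuousMap.add_apply, hTf]; simp
  have hnorm : ‖T (f + l • e)‖ ≤ B + ε * (1 + l) := by
    rw [ContinuousMap.norm_le _ (by positivity)]
    intro z
    rw [Real.norm_eq_abs, abs_le, hle]
    have a1 := hTe0 z
    have a2 := hTg0 z
    have a3 := hTg1 z
    have a4 := hT1M z
    have a5 : 0 ≤ l * T e z := mul_nonneg hl a1
    constructor
    · nlinarith
    · by_cases hz : z ∈ O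
      · have b1 : T f z < T f y + ε := hz.1
        have b2 : T g z < T g y + ε := hz.2
        rw [hTf, hTf] at b1
        have b3 : l * T e z ≤ l * (T g y + ε) :=
          mul_le_mul_of_nonneg_left ((hTeg z).trans b2.le) hl
        nlinarith
      · have b4 : T e z ≤ ε := e4 z hz
        have b3 : l * T e z ≤ l * ε := mul_le_mul_of_nonneg_left b4 hl
        nlinarith
  have hfp : (f + l • e) p = 1 + l := by
    simp [hf, hV p hpV, hp]; norm_num
  calc 1 + l = (f + l • e) p := hfp.symm
    _ ≤ ‖(f + l • e) p‖ := Real.le_norm_self _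
    _ ≤ ‖f + l • e‖ := ContinuousMap.norm_coe_le_norm _ _
    _ = ‖(T.symm : C(K₂, ℝ) →L[ℝ] C(K₁, ℝ)) (T (f + l • e))‖ := by simp
    _ ≤ ‖(T.symm : C(K₂, ℝ) →L[ℝ] C(K₁, ℝ))‖ * ‖T (f + l • e)‖ := ContinuousLinearMap.le_opNorm _ _
    _ ≤ _ := mul_le_mul_of_nonneg_left hnorm (ContinuousLinearMap.opNorm_nonneg _)

theorem main_est2 (α : Ordinal.{0}) (y : K₂) (hy : cbDeriv K₂ α = {y}) (x : K₁)
    (hx : x ∈ cbDeriv K₁ α) (g : C(K₁, ℝ)) (hg : ∀ p, 0 ≤ g p ∧ g p ≤ 1)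
    (V : Set K₁) (hVo : IsOpen V) (hxV : x ∈ V) (hV : ∀ p ∈ V, g p = 1)
    (T : C(K₁, ℝ) ≃L[ℝ] C(K₂, ℝ)) (hT : ∀ f : C(K₁, ℝ), 0 ≤ f → 0 ≤ T f)
    (l : ℝ) (hl : 0 ≤ l)
    (hB2 : 2 * T g y - T 1 y + l * T g y ≤ ‖(T : C(K₁, ℝ) →L[ℝ] C(K₂, ℝ))‖) :
    1 + l ≤ ‖(T : C(K₁, ℝ) →L[ℝ] C(K₂, ℝ))‖ * ‖(T.symm : C(K₂, ℝ) →L[ℝ] C(K₁, ℝ))‖ := by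
  set m := ‖(T.symm : C(K₂, ℝ) →L[ℝ] C(K₁, ℝ))‖ with hm
  have hm0 : 0 ≤ m := ContinuousLinearMap.opNorm_nonneg _
  apply le_of_forall_pos_le_add
  intro δ hδ
  have hpos : 0 < (m + 1) * (1 + l) := by positivity
  have := main_est α y hy x hx g hg V hVo hxV hV T hT l hl (δ / ((m + 1) * (1 + l)))
    (by positivity) _ le_rfl hB2
  rw [← hm] at this
  have h2 : m * (δ / ((m + 1) * (1 + l)) * (1 + l)) ≤ δ := by
    have : m * (δ / ((m + 1) * (1 + l)) * (1 + l)) = δ * (m / (m + 1)) := by field_simp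
    rw [this]
    exact mul_le_of_le_one_right hδ.le ((div_le_one (by positivity)).2 (by linarith))
  linarith

end

/-- If `K₁`, `K₂` are compact Hausdorff spaces such that for some ordinal `α` and
`n ≥ 1` the derivative `K₁^(α)` has exactly `n` elements and `K₂^(α)` is a singleton,
then every positive isomorphism `T : C(K₁) → C(K₂)` satisfies
`‖T‖·‖T⁻¹‖ ≥ 2n - 1`. -/
theorem stmt_13 {K₁ K₂ : Type*} [TopologicalSpace K₁] [CompactSpace K₁] [T2Space K₁]
    [TopologicalSpace K₂] [CompactSpace K₂] [T2Space K₂]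
    (α : Ordinal.{0}) (n : ℕ) (hn : 1 ≤ n)
    (h₁ : (cbDeriv K₁ α).Finite ∧ (cbDeriv K₁ α).ncard = n)
    (h₂ : ∃ y : K₂, cbDeriv K₂ α = {y}) :
    ∀ T : C(K₁, ℝ) ≃L[ℝ] C(K₂, ℝ), (∀ f : C(K₁, ℝ), 0 ≤ f → 0 ≤ T f) →
      2 * (n : ℝ) - 1 ≤
        ‖(T : C(K₁, ℝ) →L[ℝ] C(K₂, ℝ))‖ * ‖(T.symm : C(K₂, ℝ) →L[ℝ] C(K₁, ℝ))‖ := by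
  obtain ⟨y, hy⟩ := h₂
  intro T hT
  obtain ⟨hfin, hcard⟩ := h₁
  set M := ‖(T : C(K₁, ℝ) →L[ℝ] C(K₂, ℝ))‖ with hM
  set D := M * ‖(T.symm : C(K₂, ℝ) →L[ℝ] C(K₁, ℝ))‖ with hD
  have hn1 : (1 : ℝ) ≤ n := by exact_mod_cast hn
  obtain ⟨h, h1, h2, h3⟩ := bumps hfin.toFinset
  have htc : hfin.toFinset.card = n := by rw [← hcard, Set.ncard_eq_toFinset_card _ hfin]
  have hne : hfin.toFinset.Nonempty := by rw [← Finset.card_pos, htc]; omega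
  obtain ⟨x, hxt, hmin⟩ := Finset.exists_min_image hfin.toFinset (fun x => T (h x) y) hne
  have hC : (n : ℝ) * T (h x) y ≤ T 1 y := by
    refine le_trans ?_ (sum_bound (T : C(K₁, ℝ) →L[ℝ] C(K₂, ℝ)) hT hfin.toFinset h h3 y)
    rw [← htc, ← _root_.nsmul_eq_mul]
    exact Finset.card_nsmul_le_sum _ _ _ hmin
  have hCM : T 1 y ≤ M := one_bound (T : C(K₁, ℝ) →L[ℝ] C(K₂, ℝ)) y
  obtain ⟨V, hVo, hxV, hV⟩ := h2 x
  have c0 : 0 ≤ T (h x) y := hT (h x) (fun p => (h1 x p).1) y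
  have hM0 : 0 ≤ M := ContinuousLinearMap.opNorm_nonneg _
  have hD0 : 0 ≤ D := mul_nonneg hM0 (ContinuousLinearMap.opNorm_nonneg _)
  have main := main_est2 α y hy x (by simpa using hxt) (h x) (h1 x) V hVo hxV hV T hT
  rw [← hM, ← hD] at main
  generalize T (h x) y = c at *
  generalize T 1 y = C at *
  have hc1 : c ≤ n * c := le_mul_of_one_le_left c0 hn1
  rcases c0.eq_or_lt with hc | hc
  · have := main D hD0 (by rw [← hc] at hC ⊢; linarith)
    linarith
  · have hl := main ((M + C - 2 * c) / c) (div_nonneg (by linarith) hc.le)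
      (by rw [div_mul_cancel₀ _ hc.ne']; linarith)
    refine le_trans ?_ hl
    have : 2 * (n : ℝ) - 2 ≤ (M + C - 2 * c) / c := by
      rw [le_div_iff₀ hc]; linarith
    linarith
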